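/- For a Lipschitz spinor κ = (ξ,η), define the complement κ̌ = (η', −ξ') where ' is the grade involution. Then κ̌ is again a Lipschitz spinor, the generalised Hermitian form satisfies ⟨κ, κ̌⟩ = conj(ξ)η' − conj(η)ξ' = 0, and for all x, y ∈ Cl(0,n) the real inner product (κx | κ̌y) = Re(conj(ξx)(η'y) − conj(ηx)(ξ'y)) vanishes. -/

import Mathlib

open CliffordAlgebra

noncomputable section

namespace PaperCliff

noncomputable instance : Invertible (2 : ℝ) := invertibleOfNonzero two_ne_zero

/-- The quadratic form on `ℝ^{p,q}`: `p` generators of square `+1`, `q` of square `-1`. -/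
def sigQ (p q : ℕ) : QuadraticForm ℝ (Fin (p + q) → ℝ) :=
  QuadraticMap.weightedSumSquares ℝ
    (fun i : Fin (p + q) => if (i : ℕ) < p then (1 : ℝ) else -1)

/-- The negative-definite quadratic form for `Cl(0,n)`. -/
def negQ (n : ℕ) : QuadraticForm ℝ (Fin n → ℝ) :=
  QuadraticMap.weightedSumSquares ℝ (fun _ : Fin n => (-1 : ℝ))

variable {M : Type*} [AddCommGroup M] [Module ℝ M]

/-- Clifford conjugation: composite of the grade involution and reversal. -/
def cconj {Q : QuadraticForm ℝ M} (x : CliffordAlgebra Q) : CliffordAlgebra Q :=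
  reverse (involute x)

/-- The paravectors `ℝ ⊕ ℝ^{p,q}` inside the Clifford algebra. -/
def paravec (Q : QuadraticForm ℝ M) : Submodule ℝ (CliffordAlgebra Q) :=
  LinearMap.range (Algebra.linearMap ℝ (CliffordAlgebra Q)) ⊔ LinearMap.range (ι Q)

/-- The real (degree-zero) component of an element of the Clifford algebra,
via the canonical linear isomorphism with the exterior algebra. -/
def clRe {Q : QuadraticForm ℝ M} (x : CliffordAlgebra Q) : ℝ :=
  ExteriorAlgebra.algebraMapInv (CliffordAlgebra.equivExterior Q x)

/-- The reduced basis monomial `i_{j₁} ⋯ i_{j_k}` for a finite set of indices (in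
increasing order). -/
def mono {m : ℕ} (Q : QuadraticForm ℝ (Fin m → ℝ)) (s : Finset (Fin m)) :
    CliffordAlgebra Q :=
  ((s.sort (· ≤ ·)).map fun j => ι Q (Pi.single j 1)).prod

/-- The (paravector) Lipschitz group, as a subgroup of the units: the group generated by
invertible paravectors. -/
def lipUnits (Q : QuadraticForm ℝ M) : Subgroup (CliffordAlgebra Q)ˣ :=
  Subgroup.closure {u : (CliffordAlgebra Q)ˣ | (u : CliffordAlgebra Q) ∈ paravec Q}

/-- The underlying set of the paravector Lipschitz group `$Γ`. -/
def lipGrp (Q : QuadraticForm ℝ M) : Set (CliffordAlgebra Q) :=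
  {x | ∃ u ∈ lipUnits Q, (u : CliffordAlgebra Q) = x}

/-- The Lipschitz monoid `$Γ^▷ = $Γ ∪ {0}`. -/
def lipMon (Q : QuadraticForm ℝ M) : Set (CliffordAlgebra Q) :=
  insert 0 (lipGrp Q)

/-- A Lipschitz spinor: a pair of elements of the Lipschitz monoid, not both zero,
with `ξ ⬝ conj η` a paravector. -/
def IsSpinor (Q : QuadraticForm ℝ M) (ξ η : CliffordAlgebra Q) : Prop :=
  ξ ∈ lipMon Q ∧ η ∈ lipMon Q ∧ ¬(ξ = 0 ∧ η = 0) ∧ ξ * cconj η ∈ paravec Q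

/-- Membership in `SL(2, $Γ)`: entries in the Lipschitz monoid, pseudo-determinant
`a^* d - c^* b = 1`, and `a b^*, c d^*, c^* a, d^* b` paravectors. -/
def IsSL2 (Q : QuadraticForm ℝ M) (a b c d : CliffordAlgebra Q) : Prop :=
  a ∈ lipMon Q ∧ b ∈ lipMon Q ∧ c ∈ lipMon Q ∧ d ∈ lipMon Q ∧
    reverse a * d - reverse c * b = 1 ∧
    a * reverse b ∈ paravec Q ∧ c * reverse d ∈ paravec Q ∧
    reverse c * a ∈ paravec Q ∧ reverse d * b ∈ paravec Q

/-!
The norm `u * conj u` is a real scalar on invertible paravectors, and this property passes to the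
group they generate, so it holds on the whole Lipschitz group.

Reversal fixes paravectors, so on the paravector `ξ * conj η` conjugation agrees with the grade
involution: `η * conj ξ = ξ' * reverse η`. If `η` is a unit of norm `r`, then multiplying
`conj ξ * η'` and `conj η * ξ'` by `η` on the left gives `r ξ'` in both cases, so the two agree.
-/

section StarAlgebra

theorem star_mul_self_eq_algebraMap {R A : Type*} [CommSemiring R] [Semiring A] [Star A]
    [Algebra R A] {u : Aˣ} {r : R} (h : (u : A) * star (u : A) = algebraMap R A r) :
    star (u : A) * u = algebraMap R A r := by
  rw [← u.mul_right_inj, ← mul_assoc, h, Algebra.commutes]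

variable {K A : Type*} [Field K] [Semiring A] [Algebra K A]

theorem eq_algebraMap_inv_of_mul_algebraMap_eq_one {a : A} {r : K}
    (h : a * algebraMap K A r = 1) : a = algebraMap K A r⁻¹ := by
  rcases eq_or_ne r 0 with rfl | hr
  · rw [map_zero, mul_zero] at h
    exact eq_of_zero_eq_one h _ _
  · refine left_inv_eq_right_inv h ?_
    rw [← map_mul, mul_inv_cancel₀ hr, map_one]

variable [StarMul A]

theorem mul_star_mul_of_mul_star_eq_algebraMap {R : Type*} [CommSemiring R] [Algebra R A]
    {a b : A} {r s : R} (ha : a * star a = algebraMap R A r) (hb : b * star b = algebraMap R A s) :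
    a * b * star (a * b) = algebraMap R A (r * s) := by
  calc
    a * b * star (a * b) = a * (b * star b) * star a := by simp only [star_mul, mul_assoc]
    _ = a * star a * algebraMap R A s := by rw [hb, mul_assoc, Algebra.commutes, mul_assoc]
    _ = algebraMap R A (r * s) := by rw [ha, map_mul]

theorem inv_mul_star_inv_of_mul_star_eq_algebraMap {u : Aˣ} {r : K}
    (h : (u : A) * star (u : A) = algebraMap K A r) :
    (↑u⁻¹ : A) * star (↑u⁻¹ : A) = algebraMap K A r⁻¹ := by
  apply eq_algebraMap_inv_of_mul_algebraMap_eq_one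
  calc
    (↑u⁻¹ : A) * star (↑u⁻¹ : A) * algebraMap K A r
        = ↑u⁻¹ * (star (↑u⁻¹ : A) * star (u : A)) * u := by
          rw [← star_mul_self_eq_algebraMap h]
          simp only [mul_assoc]
    _ = 1 := by rw [← star_mul, Units.mul_inv, star_one, mul_one, Units.inv_mul]

variable (K A) in
/-- The units `u` of a star algebra whose norm `u * star u` is a scalar. It is used for Clifford
algebras, with `star` the Clifford conjugation. -/
def scalarNormUnits : Subgroup Aˣ where
  carrier := {u | ∃ r : K, (u : A) * star (u : A) = algebraMap K A r}
  one_mem' := ⟨1, by simp⟩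
  mul_mem' := fun ⟨r, hr⟩ ⟨s, hs⟩ ↦ ⟨r * s, mul_star_mul_of_mul_star_eq_algebraMap hr hs⟩
  inv_mem' := fun ⟨r, hr⟩ ↦ ⟨r⁻¹, inv_mul_star_inv_of_mul_star_eq_algebraMap hr⟩

end StarAlgebra

section Involutions

variable {R V : Type*} [CommRing R] [AddCommGroup V] [Module R V] {Q : QuadraticForm R V}

theorem involute_star (x : CliffordAlgebra Q) : involute (star x) = reverse x := by
  rw [star_def', involute_involute]

theorem reverse_star (x : CliffordAlgebra Q) : reverse (star x) = involute x := by
  rw [star_def, reverse_reverse]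

theorem star_involute (x : CliffordAlgebra Q) : star (involute x) = reverse x := by
  rw [star_def, involute_involute]

theorem algebraMap_add_ι_mul_star (r : R) (v : V) :
    (algebraMap R (CliffordAlgebra Q) r + ι Q v) * star (algebraMap R _ r + ι Q v) =
      algebraMap R _ (r ^ 2 - Q v) := by
  rw [star_add, star_algebraMap, star_ι, ← sub_eq_add_neg,
    ← (Algebra.commute_algebraMap_left r (ι Q v)).sq_sub_sq, sq (ι Q v), ι_sq_scalar, map_sub,
    map_pow]

end Involutions

variable {Q : QuadraticForm ℝ M}

theorem cconj_eq_star (x : CliffordAlgebra Q) : cconj x = star x := rfl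

theorem mem_paravec_iff {x : CliffordAlgebra Q} :
    x ∈ paravec Q ↔ ∃ (r : ℝ) (v : M), algebraMap ℝ _ r + ι Q v = x := by
  simp only [paravec, Submodule.mem_sup, LinearMap.mem_range, Algebra.linearMap_apply,
    exists_exists_eq_and]

theorem involute_mem_paravec {x : CliffordAlgebra Q} (hx : x ∈ paravec Q) :
    involute x ∈ paravec Q := by
  obtain ⟨r, v, rfl⟩ := mem_paravec_iff.1 hx
  exact mem_paravec_iff.2 ⟨r, -v, by simp⟩

theorem reverse_eq_self_of_mem_paravec {x : CliffordAlgebra Q} (hx : x ∈ paravec Q) :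
    reverse x = x := by
  obtain ⟨r, v, rfl⟩ := mem_paravec_iff.1 hx
  simp

theorem star_eq_involute_of_mem_paravec {x : CliffordAlgebra Q} (hx : x ∈ paravec Q) :
    star x = involute x := by
  rw [star_def', reverse_eq_self_of_mem_paravec hx]

theorem lipUnits_le_scalarNormUnits : lipUnits Q ≤ scalarNormUnits ℝ (CliffordAlgebra Q) := by
  refine (Subgroup.closure_le _).2 fun u hu ↦ ?_
  obtain ⟨r, v, hrv⟩ := mem_paravec_iff.1 hu
  exact ⟨r ^ 2 - Q v, by rw [← hrv, algebraMap_add_ι_mul_star]⟩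

theorem lipUnits_le_comap_involute :
    lipUnits Q ≤ (lipUnits Q).comap
      (Units.map (involute (Q := Q) : CliffordAlgebra Q →* CliffordAlgebra Q)) :=
  (Subgroup.closure_le _).2 fun _ hu ↦ Subgroup.subset_closure (involute_mem_paravec hu)

theorem neg_one_mem_lipUnits : -1 ∈ lipUnits Q :=
  Subgroup.subset_closure (mem_paravec_iff.2 ⟨-1, 0, by simp⟩)

theorem involute_mem_lipMon {x : CliffordAlgebra Q} (hx : x ∈ lipMon Q) :
    involute x ∈ lipMon Q := by
  rcases hx with rfl | ⟨u, hu, rfl⟩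
  · exact Or.inl (map_zero _)
  · exact Or.inr ⟨_, lipUnits_le_comap_involute hu, rfl⟩

theorem neg_mem_lipMon {x : CliffordAlgebra Q} (hx : x ∈ lipMon Q) : -x ∈ lipMon Q := by
  rcases hx with rfl | ⟨u, hu, rfl⟩
  · exact Or.inl neg_zero
  · exact Or.inr ⟨-1 * u, mul_mem neg_one_mem_lipUnits hu, by simp⟩

theorem mul_star_eq_involute_mul_reverse {ξ η : CliffordAlgebra Q}
    (h : ξ * star η ∈ paravec Q) : η * star ξ = involute ξ * reverse η := by
  calc
    η * star ξ = star (ξ * star η) := by rw [star_mul, star_star]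
    _ = involute (ξ * star η) := star_eq_involute_of_mem_paravec h
    _ = involute ξ * reverse η := by rw [map_mul, involute_star]

theorem star_mul_involute_comm_of_mem_lipMon {ξ η : CliffordAlgebra Q} (hη : η ∈ lipMon Q)
    (h : ξ * star η ∈ paravec Q) : star ξ * involute η = star η * involute ξ := by
  rcases hη with rfl | ⟨u, hu, rfl⟩
  · simp only [map_zero, mul_zero, star_zero, zero_mul]
  obtain ⟨r, hr⟩ := lipUnits_le_scalarNormUnits hu
  have reverse_mul_involute : reverse (u : CliffordAlgebra Q) * involute ↑u = algebraMap ℝ _ r := by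
    rw [← involute_star, ← map_mul, star_mul_self_eq_algebraMap hr, AlgHom.commutes]
  refine u.mul_right_inj.1 ?_
  calc
    ↑u * (star ξ * involute ↑u) = involute ξ * (reverse ↑u * involute ↑u) := by
      rw [← mul_assoc, mul_star_eq_involute_mul_reverse h, mul_assoc]
    _ = algebraMap ℝ _ r * involute ξ := by rw [reverse_mul_involute, Algebra.commutes]
    _ = ↑u * (star ↑u * involute ξ) := by rw [← hr, mul_assoc]

theorem involute_mul_star_neg_involute {ξ η : CliffordAlgebra Q} (h : ξ * star η ∈ paravec Q) :
    involute η * star (-involute ξ) = -(ξ * star η) := by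
  rw [star_neg, star_involute, mul_neg, ← reverse_star, ← reverse.map_mul,
    reverse_eq_self_of_mem_paravec h]

theorem IsSpinor.complement {ξ η : CliffordAlgebra Q} (h : IsSpinor Q ξ η) :
    IsSpinor Q (involute η) (-involute ξ) := by
  obtain ⟨hξ, hη, hne, hp⟩ := h
  refine ⟨involute_mem_lipMon hη, neg_mem_lipMon (involute_mem_lipMon hξ), ?_, ?_⟩
  · rwa [neg_eq_zero, map_eq_zero_iff _ involute_involutive.injective,
      map_eq_zero_iff _ involute_involutive.injective, and_comm]
  · rw [cconj_eq_star, involute_mul_star_neg_involute hp]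
    exact neg_mem hp

theorem clRe_zero : clRe (0 : CliffordAlgebra Q) = 0 := by
  rw [clRe, map_zero, map_zero]

theorem complement_spinor_orthogonal_general (ξ η : CliffordAlgebra Q) (h : IsSpinor Q ξ η) :
    IsSpinor Q (involute η) (-(involute ξ)) ∧
    cconj ξ * involute η - cconj η * involute ξ = 0 ∧
    (∀ x y : CliffordAlgebra Q,
      clRe (cconj (ξ * x) * (involute η * y) +
        cconj (η * x) * ((-(involute ξ)) * y)) = 0) := by
  simp only [cconj_eq_star]
  have hermitian : star ξ * involute η - star η * involute ξ = 0 :=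
    sub_eq_zero.2 (star_mul_involute_comm_of_mem_lipMon h.2.1 h.2.2.2)
  refine ⟨h.complement, hermitian, fun x y ↦ ?_⟩
  have sesquilinear : star (ξ * x) * (involute η * y) + star (η * x) * (-involute ξ * y) =
      star x * (star ξ * involute η - star η * involute ξ) * y := by
    rw [star_mul, star_mul]
    noncomm_ring
  rw [sesquilinear, hermitian, mul_zero, zero_mul, clRe_zero]

/-- For a Lipschitz spinor `κ = (ξ,η)`, the complement
`κ̌ = (η', −ξ')` is again a Lipschitz spinor; the generalised Hermitian form satisfies
`⟨κ, κ̌⟩ = conj(ξ) η' − conj(η) ξ' = 0`; and for all `x, y`, the real inner product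
`(κx | κ̌y) = Re(conj(ξx)(η'y) − conj(ηx)(ξ'y))` vanishes. -/
theorem complement_spinor_orthogonal (n : ℕ) (ξ η : CliffordAlgebra (negQ n))
    (h : IsSpinor (negQ n) ξ η) :
    IsSpinor (negQ n) (involute η) (-(involute ξ)) ∧
    cconj ξ * involute η - cconj η * involute ξ = 0 ∧
    (∀ x y : CliffordAlgebra (negQ n),
      clRe (cconj (ξ * x) * (involute η * y) +
        cconj (η * x) * ((-(involute ξ)) * y)) = 0) :=
  complement_spinor_orthogonal_general ξ η h

end PaperCliff
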